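/- The differential entropy of αℤ-aliased Gaussian noise is at most that of the unaliased Gaussian: for all α > 0 and σ > 0, h(α,σ) ≤ (1/2)·log(2πeσ²); in particular the quantities ε_b = (1/2)log(2πeσ_b²) − h(α,σ_b) and ε_e = (1/2)log(2πeσ_e²) − h(α,σ_e) appearing in the secrecy-rate computation are nonnegative. -/

import Mathlib

open MeasureTheory Real Filter

/-- The Gaussian density with zero mean and standard deviation `σ`. -/
noncomputable def gaussDen (σ x : ℝ) : ℝ :=
  (Real.sqrt (2 * Real.pi * σ ^ 2))⁻¹ * Real.exp (-x ^ 2 / (2 * σ ^ 2))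

/-- The `αℤ`-aliased Gaussian density `f_{σ,α}(x) = Σ_{k∈ℤ} g_σ(x − kα)`. -/
noncomputable def aliasedDen (σ α x : ℝ) : ℝ := ∑' k : ℤ, gaussDen σ (x - (k : ℝ) * α)

/-- The differential entropy `h(α,σ)` of the `αℤ`-aliased Gaussian noise
on the fundamental region `[0, α)`. -/
noncomputable def aliasedEnt (α σ : ℝ) : ℝ :=
  -∫ x in Set.Ico (0 : ℝ) α, aliasedDen σ α x * Real.log (aliasedDen σ α x)

lemma gd_pos {σ : ℝ} (hσ : 0 < σ) (x : ℝ) : 0 < gaussDen σ x := by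
  unfold gaussDen; positivity

lemma gd_cont (σ : ℝ) : Continuous (gaussDen σ) := by
  unfold gaussDen; fun_prop

lemma gd_eq {σ : ℝ} (hσ : 0 < σ) :
    gaussDen σ = ProbabilityTheory.gaussianPDFReal 0 (Real.toNNReal (σ ^ 2)) := by
  ext x
  simp [gaussDen, ProbabilityTheory.gaussianPDFReal, Real.coe_toNNReal _ (sq_nonneg σ)]

lemma gd_bound {σ α : ℝ} (hσ : 0 < σ) (hα : 0 < α) (R : ℝ) :
    ∃ u : ℤ → ℝ, Summable u ∧ ∀ (k : ℤ) (x : ℝ), x ∈ Set.Icc (-R) R →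
      gaussDen σ (x - (k : ℝ) * α) ≤ u k := by
  have hT : 0 < α ^ 2 / (4 * σ ^ 2 * π) := by positivity
  have h := (summable_pow_mul_jacobiTheta₂_term_bound 0 hT 0).mul_left
    ((Real.sqrt (2 * Real.pi * σ ^ 2))⁻¹ * Real.exp (R ^ 2 / (2 * σ ^ 2)))
  refine ⟨_, h, fun k x hx => ?_⟩
  unfold gaussDen
  rw [pow_zero, one_mul, mul_assoc (Real.sqrt _)⁻¹, ← Real.exp_add]
  refine mul_le_mul_of_nonneg_left (Real.exp_le_exp.2 ?_) (by positivity)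
  have hx2 : x ^ 2 ≤ R ^ 2 := by nlinarith [hx.1, hx.2]
  have e : R ^ 2 / (2 * σ ^ 2) + -π * (α ^ 2 / (4 * σ ^ 2 * π) * (k:ℝ) ^ 2 - 2 * 0 * |(k:ℝ)|)
      = (R ^ 2 - (k * α) ^ 2 / 2) / (2 * σ ^ 2) := by
    field_simp
    ring
  simp only [Int.cast_abs] at *
  rw [e]
  gcongr
  nlinarith [sq_nonneg (2 * x - k * α)]

lemma gd_summable {σ α : ℝ} (hσ : 0 < σ) (hα : 0 < α) (x : ℝ) :
    Summable (fun k : ℤ => gaussDen σ (x - (k : ℝ) * α)) := by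
  obtain ⟨u, hu, hb⟩ := gd_bound hσ hα |x|
  exact hu.of_nonneg_of_le (fun k => (gd_pos hσ _).le)
    (fun k => hb k x ⟨neg_abs_le x, le_abs_self x⟩)

lemma gd_le {σ α : ℝ} (hσ : 0 < σ) (hα : 0 < α) (x : ℝ) :
    gaussDen σ x ≤ aliasedDen σ α x := by
  have := (gd_summable hσ hα x).le_tsum 0 (fun k _ => (gd_pos hσ _).le)
  simpa [aliasedDen] using this

lemma ad_pos {σ α : ℝ} (hσ : 0 < σ) (hα : 0 < α) (x : ℝ) : 0 < aliasedDen σ α x :=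
  (gd_pos hσ x).trans_le (gd_le hσ hα x)

lemma ad_cont {σ α : ℝ} (hσ : 0 < σ) (hα : 0 < α) : Continuous (aliasedDen σ α) := by
  rw [continuous_iff_continuousAt]
  intro x
  obtain ⟨u, hu, hb⟩ := gd_bound hσ hα (|x| + 1)
  have : ContinuousOn (aliasedDen σ α) (Set.Icc (-(|x| + 1)) (|x| + 1)) := by
    unfold aliasedDen
    refine continuousOn_tsum (fun k => ?_) hu (fun k y hy => ?_)
    · exact ((gd_cont σ).comp (by fun_prop)).continuousOn
    · rw [Real.norm_of_nonneg (gd_pos hσ _).le]; exact hb k y hy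
  refine this.continuousAt (Icc_mem_nhds ?_ ?_)
  · linarith [neg_abs_le x]
  · linarith [le_abs_self x]

lemma ad_per (σ α x : ℝ) (n : ℤ) : aliasedDen σ α (x - n * α) = aliasedDen σ α x := by
  unfold aliasedDen
  rw [← (Equiv.addLeft n).tsum_eq (fun k : ℤ => gaussDen σ (x - (k : ℝ) * α))]
  refine tsum_congr fun k => ?_
  simp only [Equiv.coe_addLeft, Int.cast_add]
  congr 1; ring

lemma log_bdd {σ α : ℝ} (hσ : 0 < σ) (hα : 0 < α) :
    ∃ M, ∀ x, ‖Real.log (aliasedDen σ α x)‖ ≤ M := by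
  have hc : Continuous fun x => Real.log (aliasedDen σ α x) :=
    (ad_cont hσ hα).log (fun x => (ad_pos hσ hα x).ne')
  obtain ⟨M, hM⟩ := (isCompact_Icc (a := (0:ℝ)) (b := α)).exists_bound_of_continuousOn
    hc.continuousOn
  refine ⟨M, fun x => ?_⟩
  have hp : Function.Periodic (aliasedDen σ α) α := by
    intro y
    have := ad_per σ α y (-1)
    simpa using this
  obtain ⟨y, hy, hxy⟩ := hp.exists_mem_Ico₀ hα x
  rw [hxy]
  exact hM y ⟨hy.1, hy.2.le⟩

lemma unfold_int {α : ℝ} (hα : 0 < α) {F : ℝ → ℝ} (hF : Integrable F) :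
    HasSum (fun n : ℤ => ∫ x in (0:ℝ)..α, F (x - n * α)) (∫ x, F x) := by
  have h := hasSum_integral_iUnion (μ := volume) (f := F)
    (s := fun n : ℤ => Set.Ioc ((0:ℝ) + n • α) (0 + (n + 1) • α)) (fun i => measurableSet_Ioc)
    (Set.pairwise_disjoint_Ioc_add_zsmul (0:ℝ) α) hF.integrableOn
  rw [iUnion_Ioc_add_zsmul hα, Measure.restrict_univ] at h
  rw [← (Equiv.neg ℤ).hasSum_iff]
  refine Eq.mp (congrArg (fun G => HasSum G (∫ x, F x)) (funext fun n => ?_)) h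
  symm
  simp only [Function.comp, Equiv.neg_apply, Int.cast_neg, neg_mul, sub_neg_eq_add]
  rw [intervalIntegral.integral_comp_add_right, intervalIntegral.integral_of_le (by linarith)]
  simp only [zsmul_eq_mul]
  congr 3
  push_cast; ring

lemma key_int {σ α : ℝ} (hσ : 0 < σ) (hα : 0 < α) :
    Integrable (fun x => gaussDen σ x * Real.log (aliasedDen σ α x)) := by
  obtain ⟨M, hM⟩ := log_bdd hσ hα
  have hc : Continuous fun x => Real.log (aliasedDen σ α x) :=
    (ad_cont hσ hα).log (fun x => (ad_pos hσ hα x).ne')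
  have hg : Integrable (gaussDen σ) := by
    rw [gd_eq hσ]; exact ProbabilityTheory.integrable_gaussianPDFReal _ _
  exact hg.mul_bdd hc.aestronglyMeasurable (Eventually.of_forall hM)

lemma key {σ α : ℝ} (hσ : 0 < σ) (hα : 0 < α) :
    ∫ x in (0:ℝ)..α, aliasedDen σ α x * Real.log (aliasedDen σ α x) =
      ∫ x, gaussDen σ x * Real.log (aliasedDen σ α x) := by
  obtain ⟨M, hM⟩ := log_bdd hσ hα
  have hc : Continuous fun x => Real.log (aliasedDen σ α x) :=
    (ad_cont hσ hα).log (fun x => (ad_pos hσ hα x).ne')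
  have h1 := unfold_int hα (key_int hσ hα)
  simp only [ad_per] at h1
  obtain ⟨u, hu, hb⟩ := gd_bound hσ hα α
  have h2 : HasSum (fun n : ℤ => ∫ x in (0:ℝ)..α,
      gaussDen σ (x - n * α) * Real.log (aliasedDen σ α x))
      (∫ x in (0:ℝ)..α, aliasedDen σ α x * Real.log (aliasedDen σ α x)) := by
    refine intervalIntegral.hasSum_integral_of_dominated_convergence (fun n _ => u n * M)
      (fun n => ?_) (fun n => ?_) ?_ ?_ ?_
    · exact (((gd_cont σ).comp (by fun_prop)).mul hc).aestronglyMeasurable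
    · refine Eventually.of_forall fun x hx => ?_
      rw [Set.uIoc_of_le hα.le] at hx
      have hh := hb n x ⟨by linarith [hx.1], hx.2⟩
      rw [norm_mul, Real.norm_of_nonneg (gd_pos hσ _).le]
      exact mul_le_mul hh (hM x) (norm_nonneg _) ((gd_pos hσ _).le.trans hh)
    · exact Eventually.of_forall fun x _ => hu.mul_right M
    · exact intervalIntegrable_const
    · exact Eventually.of_forall fun x _ => (gd_summable hσ hα x).hasSum.mul_right _
  exact h2.unique h1

lemma gd_log {σ : ℝ} (hσ : 0 < σ) (x : ℝ) : gaussDen σ x * Real.log (gaussDen σ x) =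
    -(1/2 * Real.log (2 * π * σ ^ 2)) * gaussDen σ x
      + -(1 / (2 * σ ^ 2)) * (gaussDen σ x * x ^ 2) := by
  have : Real.log (gaussDen σ x) = -(1/2 * Real.log (2 * π * σ ^ 2)) - x ^ 2 / (2 * σ ^ 2) := by
    unfold gaussDen
    rw [Real.log_mul (by positivity) (by positivity), Real.log_exp, Real.log_inv,
      Real.log_sqrt (by positivity)]
    ring
  rw [this]; ring

lemma gd_mom {σ : ℝ} (hσ : 0 < σ) :
    Integrable (fun x => gaussDen σ x * x ^ 2) ∧ ∫ x, gaussDen σ x * x ^ 2 = σ ^ 2 := by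
  have hv : Real.toNNReal (σ ^ 2) ≠ 0 := by simp [hσ.ne']
  constructor
  · have h := integrable_rpow_mul_exp_neg_mul_sq (b := 1 / (2 * σ ^ 2)) (by positivity)
      (s := 2) (by norm_num)
    refine (h.const_mul (Real.sqrt (2 * Real.pi * σ ^ 2))⁻¹).congr (Eventually.of_forall fun x => ?_)
    simp only [gaussDen, Real.rpow_two]
    rw [show -x ^ 2 / (2 * σ ^ 2) = -(1 / (2 * σ ^ 2)) * x ^ 2 by ring]
    ring
  · have h := ProbabilityTheory.variance_fun_id_gaussianReal (μ := 0) (v := Real.toNNReal (σ ^ 2))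
    rw [ProbabilityTheory.variance_eq_integral (by fun_prop),
      ProbabilityTheory.integral_id_gaussianReal,
      ProbabilityTheory.integral_gaussianReal_eq_integral_smul hv, ← gd_eq hσ,
      Real.coe_toNNReal _ (sq_nonneg σ)] at h
    simpa using h

/-- the differential entropy of the `αℤ`-aliased Gaussian noise is at most
the differential entropy `(1/2)·log(2πeσ²)` of the unaliased Gaussian. -/
theorem aliasedEnt_le_gaussian_entropy (α σ : ℝ) (hα : 0 < α) (hσ : 0 < σ) :
    aliasedEnt α σ ≤ (1 / 2 : ℝ) * Real.log (2 * Real.pi * Real.exp 1 * σ ^ 2) := by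
  have hv : Real.toNNReal (σ ^ 2) ≠ 0 := by simp [hσ.ne']
  have hg : Integrable (gaussDen σ) := by
    rw [gd_eq hσ]; exact ProbabilityTheory.integrable_gaussianPDFReal _ _
  have hg1 : ∫ x, gaussDen σ x = 1 := by
    rw [gd_eq hσ]; exact ProbabilityTheory.integral_gaussianPDFReal_eq_one _ hv
  obtain ⟨hm, hm1⟩ := gd_mom hσ
  have hi : Integrable (fun x => gaussDen σ x * Real.log (gaussDen σ x)) := by
    simp only [gd_log hσ]
    exact (hg.const_mul _).add (hm.const_mul _)
  have hval : ∫ x, gaussDen σ x * Real.log (gaussDen σ x) =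
      -(1/2 * Real.log (2 * π * σ ^ 2)) - 1 / 2 := by
    simp only [gd_log hσ]
    rw [integral_add (hg.const_mul _) (hm.const_mul _), integral_const_mul, integral_const_mul,
      hg1, hm1]
    field_simp
    ring
  have hle : ∫ x, gaussDen σ x * Real.log (gaussDen σ x) ≤
      ∫ x, gaussDen σ x * Real.log (aliasedDen σ α x) := by
    refine integral_mono hi (key_int hσ hα) fun x => ?_
    exact mul_le_mul_of_nonneg_left (Real.log_le_log (gd_pos hσ x) (gd_le hσ hα x))
      (gd_pos hσ x).le
  have hlog : Real.log (2 * Real.pi * Real.exp 1 * σ ^ 2) = Real.log (2 * π * σ ^ 2) + 1 := by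
    rw [show 2 * Real.pi * Real.exp 1 * σ ^ 2 = (2 * π * σ ^ 2) * Real.exp 1 by ring,
      Real.log_mul (by positivity) (by positivity), Real.log_exp]
  unfold aliasedEnt
  rw [integral_Ico_eq_integral_Ioc, ← intervalIntegral.integral_of_le hα.le, key hσ hα, hlog]
  linarith
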